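/- Let x̄ be feasible for (P), let d ∈ T^lin_{F,Γ}(x̄), and let MSCQ(d) hold at x̄. Then d ∈ T_X(x̄) and N_X(x̄; d) ⊂ ∪_{λ ∈ N_Γ(F(x̄); F'(x̄; d))} ∂⟨λ, F⟩(x̄; d). -/

import Mathlib

open Filter Topology Metric Set
open scoped RealInnerProductSpace Pointwise

noncomputable section

/-- Euclidean space `ℝ^n`. -/
abbrev Eu (n : ℕ) := EuclideanSpace ℝ (Fin n)

section Cones

variable {H : Type*} [NormedAddCommGroup H] [InnerProductSpace ℝ H]

/-- Tangent (Bouligand) cone to `Ω` at `x` (empty if `x ∉ Ω`). -/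
def tanCone (Ω : Set H) (x : H) : Set H :=
  {d | x ∈ Ω ∧ ∃ (dk : ℕ → H) (tk : ℕ → ℝ),
    Tendsto dk atTop (𝓝 d) ∧ (∀ k, 0 < tk k) ∧ Tendsto tk atTop (𝓝 0) ∧
    ∀ k, x + tk k • dk k ∈ Ω}

/-- Polar cone of a set. -/
def polarCone (C : Set H) : Set H := {y | ∀ x ∈ C, ⟪x, y⟫ ≤ 0}

/-- Regular (Fréchet) normal cone: polar of the tangent cone (empty if `x ∉ Ω`). -/
def regNormal (Ω : Set H) (x : H) : Set H :=
  {η | x ∈ Ω ∧ η ∈ polarCone (tanCone Ω x)}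

/-- Limiting (Mordukhovich) normal cone (empty if `x ∉ Ω`). -/
def limNormal (Ω : Set H) (x : H) : Set H :=
  {η | x ∈ Ω ∧ ∃ (xk ηk : ℕ → H),
    Tendsto xk atTop (𝓝 x) ∧ Tendsto ηk atTop (𝓝 η) ∧
    ∀ k, ηk k ∈ regNormal Ω (xk k)}

/-- Directional limiting normal cone to `Ω` at `x` in direction `d`. -/
def dirLimNormal (Ω : Set H) (x d : H) : Set H :=
  {η | x ∈ Ω ∧ ∃ (dk : ℕ → H) (tk : ℕ → ℝ) (ηk : ℕ → H),
    Tendsto dk atTop (𝓝 d) ∧ (∀ k, 0 < tk k) ∧ Tendsto tk atTop (𝓝 0) ∧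
    Tendsto ηk atTop (𝓝 η) ∧
    ∀ k, ηk k ∈ regNormal Ω (x + tk k • dk k)}

/-- The pair `(ξ, r)` as an element of the ℓ²-product `H ×₂ ℝ`. -/
def pl2 (ξ : H) (r : ℝ) : WithLp 2 (H × ℝ) := (WithLp.equiv 2 (H × ℝ)).symm (ξ, r)

/-- Epigraph of `φ` as a subset of the ℓ²-product `H ×₂ ℝ`. -/
def epigraphSet (φ : H → ℝ) : Set (WithLp 2 (H × ℝ)) :=
  {p | φ ((WithLp.equiv 2 (H × ℝ)) p).1 ≤ ((WithLp.equiv 2 (H × ℝ)) p).2}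

/-- Limiting subdifferential of `φ` at `x`. -/
def limSubdiff (φ : H → ℝ) (x : H) : Set H :=
  {ξ | pl2 ξ (-1) ∈ limNormal (epigraphSet φ) (pl2 x (φ x))}

/-- Directional limiting subdifferential of `φ` at `x` in direction `d`, where `φd`
denotes the directional derivative `φ'(x; d)`. -/
def dirLimSubdiff (φ : H → ℝ) (x d : H) (φd : ℝ) : Set H :=
  {ξ | pl2 ξ (-1) ∈ dirLimNormal (epigraphSet φ) (pl2 x (φ x)) (pl2 d φd)}

/-- Directional neighborhood `B_{ε,δ}(d)`. -/
def dirNbhd (d : H) (ε δ : ℝ) : Set H :=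
  {y | ‖y‖ ≤ ε ∧ ‖‖d‖ • y - ‖y‖ • d‖ ≤ δ * (‖y‖ * ‖d‖)}

end Cones

section Problem

variable {n l : ℕ}

/-- `F' x d` is the directional derivative of `F` at `x` in direction `d`. -/
def IsDirDeriv (F : Eu n → Eu l) (F' : Eu n → Eu n → Eu l) : Prop :=
  ∀ x d : Eu n,
    Tendsto (fun t : ℝ => t⁻¹ • (F (x + t • d) - F x)) (𝓝[>] (0:ℝ)) (𝓝 (F' x d))

/-- Limiting subdifferential of the scalarization `⟨λ, F⟩` at `x`. -/
def scalSubdiff (F : Eu n → Eu l) (lam : Eu l) (x : Eu n) : Set (Eu n) :=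
  limSubdiff (fun y => ⟪lam, F y⟫) x

/-- Directional limiting subdifferential of `⟨λ, F⟩` at `x` in direction `d`. -/
def scalDirSubdiff (F : Eu n → Eu l) (F' : Eu n → Eu n → Eu l) (lam : Eu l)
    (x d : Eu n) : Set (Eu n) :=
  dirLimSubdiff (fun y => ⟪lam, F y⟫) x d ⟪lam, F' x d⟫

/-- Linearization cone. -/
def linCone (F : Eu n → Eu l) (F' : Eu n → Eu n → Eu l) (Γ : Set (Eu l)) (x : Eu n) :
    Set (Eu n) :=
  {d | F' x d ∈ tanCone Γ (F x)}

/-- Explicit critical cone `C(x̄)`. -/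
def critCone (f : Eu n → ℝ) (F : Eu n → Eu l) (F' : Eu n → Eu n → Eu l)
    (Γ : Set (Eu l)) (x : Eu n) : Set (Eu n) :=
  {d | ⟪gradient f x, d⟫ ≤ 0 ∧ d ∈ linCone F F' Γ x}

/-- Implicit critical cone `Ĉ(x̄)`. -/
def implCritCone (f : Eu n → ℝ) (F : Eu n → Eu l) (Γ : Set (Eu l)) (x : Eu n) :
    Set (Eu n) :=
  {d | ⟪gradient f x, d⟫ ≤ 0 ∧ d ∈ tanCone (F ⁻¹' Γ) x}

/-- M-stationarity. -/
def MStat (f : Eu n → ℝ) (F : Eu n → Eu l) (Γ : Set (Eu l)) (x : Eu n) : Prop :=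
  ∃ lam : Eu l, -gradient f x ∈ scalSubdiff F lam x ∧ lam ∈ limNormal Γ (F x)

/-- M-stationarity in direction `d`. -/
def MStatDir (f : Eu n → ℝ) (F : Eu n → Eu l) (F' : Eu n → Eu n → Eu l)
    (Γ : Set (Eu l)) (x d : Eu n) : Prop :=
  ∃ lam : Eu l, -gradient f x ∈ scalDirSubdiff F F' lam x d ∧
    lam ∈ dirLimNormal Γ (F x) (F' x d)

/-- Metric subregularity constraint qualification in direction `d`. -/
def MSCQdir (F : Eu n → Eu l) (Γ : Set (Eu l)) (x d : Eu n) : Prop :=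
  ∃ ε > (0:ℝ), ∃ δ > (0:ℝ), ∃ κ > (0:ℝ), ∀ y : Eu n, y - x ∈ dirNbhd d ε δ →
    infDist y (F ⁻¹' Γ) ≤ κ * infDist (F y) Γ

/-- Metric subregularity constraint qualification. -/
def MSCQ (F : Eu n → Eu l) (Γ : Set (Eu l)) (x : Eu n) : Prop := MSCQdir F Γ x 0

/-- AM-stationary sequence w.r.t. `x`. -/
def AMSeq (f : Eu n → ℝ) (F : Eu n → Eu l) (Γ : Set (Eu l)) (x : Eu n)
    (xk : ℕ → Eu n) (lamk δk : ℕ → Eu l) (εk : ℕ → Eu n) : Prop :=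
  (∀ k, εk k - gradient f (xk k) ∈ scalSubdiff F (lamk k) (xk k)) ∧
  (∀ k, lamk k ∈ limNormal Γ (F (xk k) - δk k)) ∧
  Tendsto xk atTop (𝓝 x) ∧ Tendsto δk atTop (𝓝 0) ∧ Tendsto εk atTop (𝓝 0)

/-- AM-stationarity. -/
def AMStat (f : Eu n → ℝ) (F : Eu n → Eu l) (Γ : Set (Eu l)) (x : Eu n) : Prop :=
  ∃ xk lamk δk εk, AMSeq f F Γ x xk lamk δk εk

/-- AM-stationary sequence w.r.t. `x` in direction `d`. -/
def AMSeqDir (f : Eu n → ℝ) (F : Eu n → Eu l) (Γ : Set (Eu l)) (x : Eu n)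
    (xk : ℕ → Eu n) (lamk δk : ℕ → Eu l) (εk : ℕ → Eu n) (d : Eu n) : Prop :=
  AMSeq f F Γ x xk lamk δk εk ∧
  (∀ k, xk k ≠ x) ∧
  Tendsto (fun k => ‖xk k - x‖⁻¹ • (xk k - x)) atTop (𝓝 d) ∧
  Tendsto (fun k => ‖xk k - x‖⁻¹ • δk k) atTop (𝓝 (0 : Eu l)) ∧
  (∃ θ : ℕ → ℝ, (∀ k, 0 ≤ θ k) ∧ Tendsto θ atTop (𝓝 0) ∧
    ∀ k, ‖‖δk k‖ • lamk k - ‖lamk k‖ • δk k‖ ≤ ‖δk k‖ * ‖lamk k‖ * θ k) ∧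
  (∃ M : ℝ, ∀ k, ‖δk k‖ * ‖lamk k‖ / ‖xk k - x‖ ≤ M)

/-- AM-stationarity in direction `d`. -/
def AMStatDir (f : Eu n → ℝ) (F : Eu n → Eu l) (Γ : Set (Eu l)) (x d : Eu n) : Prop :=
  ∃ xk lamk δk εk, AMSeqDir f F Γ x xk lamk δk εk d

/-- The Minkowski sum `Σ_i |λ_i| ∂(sgn(λ_i) F_i)(x; d)`. -/
def dirSumSet (F : Eu n → Eu l) (F' : Eu n → Eu n → Eu l) (lam : Eu l) (x d : Eu n) :
    Set (Eu n) :=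
  {v | ∃ s : Fin l → Eu n,
    (∀ i, s i ∈ |lam i| • dirLimSubdiff (fun y => Real.sign (lam i) * F y i) x d
        (Real.sign (lam i) * F' x d i)) ∧
    v = ∑ i, s i}

/-- Standing sum-rule assumption. -/
def SumRule (F : Eu n → Eu l) (F' : Eu n → Eu n → Eu l) : Prop :=
  ∀ (x d : Eu n) (lam : Eu l), scalDirSubdiff F F' lam x d = dirSumSet F F' lam x d

end Problem


section Helpers

variable {H : Type*} [NormedAddCommGroup H] [InnerProductSpace ℝ H]

lemma aux_smul_bound {t e : ℝ} (ht : 0 < t) {p x d : H}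
    (h : ‖p - x - t • d‖ ≤ e * t) : ‖t⁻¹ • (p - x) - d‖ ≤ e := by
  have h1 : t⁻¹ • (p - x) - d = t⁻¹ • (p - x - t • d) := by
    rw [smul_sub t⁻¹ (p - x), smul_smul, inv_mul_cancel₀ ht.ne', one_smul]
  rw [h1, norm_smul, Real.norm_eq_abs, abs_of_pos (inv_pos.2 ht)]
  calc t⁻¹ * ‖p - x - t • d‖ ≤ t⁻¹ * (e * t) := by gcongr
    _ = e := by field_simp

lemma aux_seq {E : Type*} [NormedAddCommGroup E] {u : ℕ → E} {a : E}
    (h : ∀ k : ℕ, ‖u k - a‖ ≤ 1 / ((k : ℝ) + 1)) : Tendsto u atTop (𝓝 a) := by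
  rw [tendsto_iff_norm_sub_tendsto_zero]
  exact squeeze_zero (fun _ => norm_nonneg _) h tendsto_one_div_add_atTop_nhds_zero_nat

lemma aux_back {t : ℝ} (ht : 0 < t) (p x : H) : x + t • (t⁻¹ • (p - x)) = p := by
  rw [smul_smul, mul_inv_cancel₀ ht.ne', one_smul]; abel

lemma tanCone_intro {Ω : Set H} {x d : H} (hx : x ∈ Ω)
    (h : ∀ e > (0:ℝ), ∃ t > (0:ℝ), t < e ∧ ∃ p ∈ Ω, ‖p - x - t • d‖ ≤ e * t) :
    d ∈ tanCone Ω x := by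
  have h' : ∀ k : ℕ, ∃ t > (0:ℝ), t < 1 / ((k : ℝ) + 1) ∧
      ∃ p ∈ Ω, ‖p - x - t • d‖ ≤ (1 / ((k : ℝ) + 1)) * t := fun k => h _ (by positivity)
  choose t ht hte p hp hpe using h'
  refine ⟨hx, fun k => (t k)⁻¹ • (p k - x), t, aux_seq fun k => aux_smul_bound (ht k) (hpe k),
    ht, aux_seq fun k => ?_, fun k => ?_⟩
  · rw [sub_zero, Real.norm_eq_abs, abs_of_pos (ht k)]; exact (hte k).le
  · simpa only [aux_back (ht k)] using hp k

lemma tanCone_elim {Ω : Set H} {x d : H} (h : d ∈ tanCone Ω x) (e : ℝ) (he : 0 < e) :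
    ∃ t > (0:ℝ), t < e ∧ ∃ p ∈ Ω, ‖p - x - t • d‖ ≤ e * t := by
  obtain ⟨_, dk, tk, hdk, htk, htk0, hm⟩ := h
  have h1 := (htk0.eventually (gt_mem_nhds he)).and
    ((tendsto_iff_norm_sub_tendsto_zero.1 hdk).eventually (gt_mem_nhds he))
  obtain ⟨k, hk1, hk2⟩ := h1.exists
  refine ⟨tk k, htk k, hk1, _, hm k, ?_⟩
  rw [add_sub_cancel_left, ← smul_sub, norm_smul, Real.norm_eq_abs, abs_of_pos (htk k), mul_comm]
  have := htk k
  gcongr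

lemma dirLimNormal_intro {Ω : Set H} {x d η : H} (hx : x ∈ Ω)
    (h : ∀ e > (0:ℝ), ∃ t > (0:ℝ), t < e ∧ ∃ p η', ‖p - x - t • d‖ ≤ e * t ∧
      ‖η' - η‖ ≤ e ∧ η' ∈ regNormal Ω p) :
    η ∈ dirLimNormal Ω x d := by
  have h' : ∀ k : ℕ, ∃ t > (0:ℝ), t < 1 / ((k : ℝ) + 1) ∧ ∃ p η',
      ‖p - x - t • d‖ ≤ (1 / ((k : ℝ) + 1)) * t ∧
      ‖η' - η‖ ≤ 1 / ((k : ℝ) + 1) ∧ η' ∈ regNormal Ω p := fun k => h _ (by positivity)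
  choose t ht hte p η' hpe hη hreg using h'
  refine ⟨hx, fun k => (t k)⁻¹ • (p k - x), t, η',
    aux_seq fun k => aux_smul_bound (ht k) (hpe k),
    ht, aux_seq fun k => ?_, aux_seq hη, fun k => ?_⟩
  · rw [sub_zero, Real.norm_eq_abs, abs_of_pos (ht k)]; exact (hte k).le
  · simpa only [aux_back (ht k)] using hreg k

lemma dirLimNormal_elim {Ω : Set H} {x d η : H} (h : η ∈ dirLimNormal Ω x d)
    (e : ℝ) (he : 0 < e) :
    ∃ t > (0:ℝ), t < e ∧ ∃ p η', ‖p - x - t • d‖ ≤ e * t ∧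
      ‖η' - η‖ ≤ e ∧ η' ∈ regNormal Ω p := by
  obtain ⟨_, dk, tk, ηk, hdk, htk, htk0, hη, hm⟩ := h
  have h1 := ((htk0.eventually (gt_mem_nhds he)).and
    ((tendsto_iff_norm_sub_tendsto_zero.1 hdk).eventually (gt_mem_nhds he))).and
    ((tendsto_iff_norm_sub_tendsto_zero.1 hη).eventually (gt_mem_nhds he))
  obtain ⟨k, ⟨hk1, hk2⟩, hk3⟩ := h1.exists
  refine ⟨tk k, htk k, hk1, _, ηk k, ?_, hk3.le, hm k⟩
  rw [add_sub_cancel_left, ← smul_sub, norm_smul, Real.norm_eq_abs, abs_of_pos (htk k), mul_comm]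
  have := htk k
  gcongr

/-- Proximal normals are regular normals. -/
lemma regNormal_of_prox {Ω : Set H} {v η : H} (hv : v ∈ Ω) (C : ℝ)
    (h : ∀ᶠ p in 𝓝 v, p ∈ Ω → ⟪η, p - v⟫ ≤ C * ‖p - v‖ ^ 2) : η ∈ regNormal Ω v := by
  refine ⟨hv, ?_⟩
  rintro w ⟨_, dk, tk, hdk, htk, htk0, hm⟩
  have hlim : Tendsto (fun k => v + tk k • dk k) atTop (𝓝 v) := by
    simpa using (tendsto_const_nhds (x := v)).add (htk0.smul hdk)
  have hL : Tendsto (fun k => ⟪dk k, η⟫) atTop (𝓝 ⟪w, η⟫) := hdk.inner tendsto_const_nhds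
  have hR : Tendsto (fun k => C * (tk k * ‖dk k‖ ^ 2)) atTop (𝓝 0) := by
    simpa using (htk0.mul (hdk.norm.pow 2)).const_mul C
  refine le_of_tendsto_of_tendsto hL hR ?_
  filter_upwards [hlim.eventually h] with k hk
  have h1 := hk (hm k)
  rw [add_sub_cancel_left, inner_smul_right, norm_smul, Real.norm_eq_abs, abs_of_pos (htk k),
    real_inner_comm] at h1
  have h2 : tk k * ⟪dk k, η⟫ ≤ tk k * (C * (tk k * ‖dk k‖ ^ 2)) := by
    calc _ ≤ _ := h1
      _ = _ := by ring
  exact le_of_mul_le_mul_left h2 (htk k)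

/-- Regular normals satisfy the Fréchet inequality. -/
lemma regNormal_frechet [ProperSpace H] {Ω : Set H} {v η : H} (h : η ∈ regNormal Ω v)
    (ε : ℝ) (hε : 0 < ε) :
    ∃ r > (0:ℝ), ∀ p ∈ Ω, ‖p - v‖ < r → ⟪η, p - v⟫ ≤ ε * ‖p - v‖ := by
  by_contra hcon
  push Not at hcon
  have h' : ∀ k : ℕ, ∃ p ∈ Ω, ‖p - v‖ < 1 / ((k : ℝ) + 1) ∧ ε * ‖p - v‖ < ⟪η, p - v⟫ :=
    fun k => hcon _ (by positivity)
  choose p hp hpv hin using h'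
  have hpos : ∀ k, 0 < ‖p k - v‖ := by
    intro k
    rcases (norm_nonneg (p k - v)).eq_or_lt with h0 | h0
    · have h1 : p k - v = 0 := norm_eq_zero.1 h0.symm
      have := hin k
      simp [h1] at this
    · exact h0
  have hball : ∀ k, ‖p k - v‖⁻¹ • (p k - v) ∈ closedBall (0 : H) 1 := by
    intro k
    rw [mem_closedBall_zero_iff, norm_smul, norm_inv, norm_norm, inv_mul_cancel₀ (hpos k).ne']
  obtain ⟨w, -, φ, hφ, hlim⟩ := (isCompact_closedBall (0 : H) 1).tendsto_subseq hball
  have htend : Tendsto (fun k => ‖p k - v‖) atTop (𝓝 0) :=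
    squeeze_zero (fun _ => norm_nonneg _) (fun k => (hpv k).le)
      tendsto_one_div_add_atTop_nhds_zero_nat
  have hw : w ∈ tanCone Ω v := by
    refine ⟨h.1, _, fun k => ‖p (φ k) - v‖, hlim, fun k => hpos _,
      htend.comp hφ.tendsto_atTop, fun k => ?_⟩
    simpa only [Function.comp, aux_back (hpos (φ k))] using hp (φ k)
  have h1 : ⟪w, η⟫ ≤ 0 := h.2 w hw
  have h2 : ε ≤ ⟪w, η⟫ := by
    refine ge_of_tendsto' (hlim.inner (tendsto_const_nhds (x := η))) fun k => ?_
    simp only [Function.comp]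
    rw [real_inner_smul_left, real_inner_comm]
    have := hin (φ k)
    have h3 := hpos (φ k)
    rw [← div_eq_inv_mul, le_div_iff₀ h3]
    exact this.le
  linarith

lemma dirNbhd_of_close (d : H) (ε δ : ℝ) (hε : 0 < ε) (hδ : 0 < δ) :
    ∃ e > (0:ℝ), ∀ t > (0:ℝ), t < e → ∀ z : H, ‖z - t • d‖ ≤ e * t → z ∈ dirNbhd d ε δ := by
  obtain ⟨e1, he1, he1'⟩ : ∃ e1 > (0:ℝ), d ≠ 0 → 2 * e1 ≤ δ * (‖d‖ - e1) := by
    by_cases hd : d = 0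
    · exact ⟨1, one_pos, fun h => absurd hd h⟩
    · have := norm_pos_iff.2 hd
      refine ⟨‖d‖ * δ / (2 + δ), by positivity, fun _ => le_of_eq ?_⟩
      field_simp
      ring
  refine ⟨min (min e1 1) (ε / (‖d‖ + 1)), by positivity, fun t ht hte z hz => ?_⟩
  set e := min (min e1 1) (ε / (‖d‖ + 1)) with he
  have a1 : e ≤ e1 := (min_le_left _ _).trans (min_le_left _ _)
  have a2 : e ≤ 1 := (min_le_left _ _).trans (min_le_right _ _)
  have a3 : t ≤ ε / (‖d‖ + 1) := hte.le.trans (min_le_right _ _)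
  have htd : ‖t • d‖ = t * ‖d‖ := by rw [norm_smul, Real.norm_eq_abs, abs_of_pos ht]
  have b1 : ‖z‖ ≤ t * ‖d‖ + e * t := by
    have := norm_add_le (z - t • d) (t • d)
    rw [sub_add_cancel, htd] at this
    linarith
  have b2 : t * ‖d‖ - e * t ≤ ‖z‖ := by
    have := norm_sub_norm_le (t • d) z
    rw [norm_sub_rev, htd] at this
    linarith
  have b3 : e * t ≤ e1 * t := by gcongr
  constructor
  · rw [le_div_iff₀ (by positivity)] at a3
    nlinarith
  · by_cases hd : d = 0
    · simp [hd]
    have hdp := norm_pos_iff.2 hd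
    have c1 := he1' hd
    have c2 : ‖d‖ • z - ‖z‖ • d = ‖d‖ • (z - t • d) + (t * ‖d‖ - ‖z‖) • d := by
      module
    have c3 : |t * ‖d‖ - ‖z‖| ≤ e * t := by rw [abs_le]; constructor <;> linarith
    calc ‖‖d‖ • z - ‖z‖ • d‖ ≤ ‖d‖ * ‖z - t • d‖ + |t * ‖d‖ - ‖z‖| * ‖d‖ := by
          rw [c2]
          refine (norm_add_le _ _).trans (le_of_eq ?_)
          rw [norm_smul, norm_smul, norm_norm, Real.norm_eq_abs]
      _ ≤ ‖d‖ * (e * t) + (e * t) * ‖d‖ := by gcongr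
      _ = (2 * (e * t)) * ‖d‖ := by ring
      _ ≤ (δ * ‖z‖) * ‖d‖ := by
          refine mul_le_mul_of_nonneg_right ?_ hdp.le
          have : (2 * e1) * t ≤ (δ * (‖d‖ - e1)) * t := by gcongr
          have : δ * (t * ‖d‖ - e1 * t) ≤ δ * ‖z‖ := by gcongr; linarith
          nlinarith
      _ = _ := by ring

/-- From an approximate Fréchet subgradient to a nearby exact one. -/
lemma fuzzy_sub [ProperSpace H] {φ : H → ℝ} (hφ : Continuous φ) {y ξ : H} {ε : ℝ} (hε : 0 < ε)
    (h : ∀ᶠ y' in 𝓝 y, ⟪ξ, y' - y⟫ ≤ φ y' - φ y + ε * ‖y' - y‖) (η : ℝ) (hη : 0 < η) :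
    ∃ z ξ', ‖z - y‖ < η ∧ ‖ξ' - ξ‖ ≤ 2 * ε ∧
      pl2 ξ' (-1) ∈ regNormal (epigraphSet φ) (pl2 z (φ z)) := by
  obtain ⟨r0, hr0, hr⟩ := Metric.eventually_nhds_iff.1 h
  set r := min r0 η / 2 with hrdef
  have hrpos : 0 < r := by positivity
  have hr1 : r < r0 := by
    have := min_le_left r0 η
    have : 0 < min r0 η := by positivity
    linarith
  have hr2 : r < η := by
    have := min_le_right r0 η
    have : 0 < min r0 η := by positivity
    linarith
  set m := 2 * ε / r + 1 with hm
  have hmpos : 0 < m := by positivity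
  have hmr : 2 * ε < m * r := by
    have : m * r = 2 * ε + r := by rw [hm]; field_simp
    linarith
  obtain ⟨z, hz, hmin⟩ := (isCompact_closedBall y r).exists_isMinOn
    (f := fun y' => φ y' - ⟪ξ, y'⟫ + m / 2 * ‖y' - y‖ ^ 2)
    ⟨y, mem_closedBall_self hrpos.le⟩ (by fun_prop)
  rw [mem_closedBall, dist_eq_norm] at hz
  have hz0 := hmin (mem_closedBall_self hrpos.le)
  simp only [sub_self, norm_zero, mem_ofPred_eq] at hz0
  have hz1 := hr (y := z) (by rw [dist_eq_norm]; linarith)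
  rw [inner_sub_right] at hz1
  have hz2 : m * ‖z - y‖ ≤ 2 * ε := by
    rcases (norm_nonneg (z - y)).eq_or_lt with h0 | h0
    · rw [← h0]; linarith
    · have : (m * ‖z - y‖) * ‖z - y‖ ≤ (2 * ε) * ‖z - y‖ := by nlinarith
      exact le_of_mul_le_mul_right this h0
  have hz3 : ‖z - y‖ < r := by
    by_contra hc
    push Not at hc
    have : m * r ≤ m * ‖z - y‖ := by gcongr
    linarith
  refine ⟨z, ξ - m • (z - y), by linarith, ?_, ?_⟩
  · rw [sub_sub_cancel_left, norm_neg, norm_smul, Real.norm_eq_abs, abs_of_pos hmpos]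
    exact hz2
  · refine regNormal_of_prox (by simp [epigraphSet, pl2]) (m / 2) ?_
    have hcont : Continuous (fun p : WithLp 2 (H × ℝ) => p.fst) := by fun_prop
    have hball : ∀ᶠ p : WithLp 2 (H × ℝ) in 𝓝 (pl2 z (φ z)), p.fst ∈ closedBall y r := by
      apply hcont.continuousAt.eventually
      exact mem_of_superset (isOpen_ball.mem_nhds
        (by simpa [pl2, dist_eq_norm] using hz3 : (pl2 z (φ z)).fst ∈ ball y r)) ball_subset_closedBall
    filter_upwards [hball] with p hp hpe
    have h1 := hmin hp
    simp only [mem_ofPred_eq] at h1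
    have h2 : φ p.fst ≤ p.snd := hpe
    have h3 : ‖p.fst - z‖ ^ 2 ≤ ‖p - pl2 z (φ z)‖ ^ 2 := by
      rw [WithLp.prod_norm_sq_eq_of_L2]
      have : (p - pl2 z (φ z)).fst = p.fst - z := rfl
      rw [this]
      have := sq_nonneg ‖(p - pl2 z (φ z)).snd‖
      linarith
    have h4 : ⟪pl2 (ξ - m • (z - y)) (-1), p - pl2 z (φ z)⟫
        = ⟪ξ - m • (z - y), p.fst - z⟫ - (p.snd - φ z) := by
      rw [WithLp.prod_inner_apply]
      simp [pl2]
      ring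
    have h5 : ‖p.fst - y‖ ^ 2 = ‖p.fst - z‖ ^ 2 + 2 * ⟪z - y, p.fst - z⟫ + ‖z - y‖ ^ 2 := by
      have : p.fst - y = (p.fst - z) + (z - y) := by abel
      rw [this, norm_add_sq_real, real_inner_comm]
    have h6 : m / 2 * ‖p.fst - z‖ ^ 2 ≤ m / 2 * ‖p - pl2 z (φ z)‖ ^ 2 := by gcongr
    rw [h4, inner_sub_left, real_inner_smul_left, inner_sub_right ξ]
    rw [h5] at h1
    nlinarith

end Helpers
section Main

variable {n l : ℕ}

/-- Directional differentiability of a Lipschitz map is uniform over nearby directions. -/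
lemma dd_close {F : Eu n → Eu l} {F' : Eu n → Eu n → Eu l} (hF' : IsDirDeriv F F')
    {x : Eu n} (d : Eu n) {M ρ : ℝ} (hM : 0 < M) (hρ : 0 < ρ)
    (hLip : ∀ y ∈ closedBall x ρ, ∀ z ∈ closedBall x ρ, ‖F y - F z‖ ≤ M * ‖y - z‖)
    (e : ℝ) (he : 0 < e) :
    ∃ e' > (0:ℝ), ∀ t > (0:ℝ), t < e' → ∀ y, ‖y - x - t • d‖ ≤ e' * t →
      ‖F y - F x - t • F' x d‖ ≤ e * t := by
  have h1 := (tendsto_iff_norm_sub_tendsto_zero.1 (hF' x d)).eventually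
    (gt_mem_nhds (half_pos he))
  rw [eventually_nhdsWithin_iff, Metric.eventually_nhds_iff] at h1
  obtain ⟨a, ha, hd⟩ := h1
  refine ⟨min (min a (e / (2 * M))) (min 1 (ρ / (‖d‖ + 1))), by positivity,
    fun t ht hte y hy => ?_⟩
  set e' := min (min a (e / (2 * M))) (min 1 (ρ / (‖d‖ + 1))) with he'
  have a1 : e' ≤ a := (min_le_left _ _).trans (min_le_left _ _)
  have a2 : e' ≤ e / (2 * M) := (min_le_left _ _).trans (min_le_right _ _)
  have a3 : e' ≤ 1 := (min_le_right _ _).trans (min_le_left _ _)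
  have a4 : e' ≤ ρ / (‖d‖ + 1) := (min_le_right _ _).trans (min_le_right _ _)
  have htd : ‖t • d‖ = t * ‖d‖ := by rw [norm_smul, Real.norm_eq_abs, abs_of_pos ht]
  have b0 : t * (‖d‖ + 1) ≤ ρ := by
    rw [← le_div_iff₀ (by positivity)]; linarith
  have b0' : e' * t ≤ 1 * t := by gcongr
  have b1 : y ∈ closedBall x ρ := by
    rw [mem_closedBall, dist_eq_norm]
    have := norm_add_le (y - x - t • d) (t • d)
    rw [sub_add_cancel, htd] at this
    nlinarith
  have b2 : x + t • d ∈ closedBall x ρ := by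
    rw [mem_closedBall, dist_eq_norm, add_sub_cancel_left, htd]
    nlinarith
  have c1 := hLip y b1 _ b2
  rw [← sub_sub] at c1
  have c2 := @hd t (by rw [dist_zero_right, Real.norm_eq_abs, abs_of_pos ht]; linarith) ht
  have c3 : F (x + t • d) - F x - t • F' x d
      = t • (t⁻¹ • (F (x + t • d) - F x) - F' x d) := by
    rw [smul_sub t, smul_smul, mul_inv_cancel₀ ht.ne', one_smul]
  have c4 : ‖F (x + t • d) - F x - t • F' x d‖ ≤ t * (e / 2) := by
    rw [c3, norm_smul, Real.norm_eq_abs, abs_of_pos ht]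
    gcongr
  have c5 : M * ‖y - x - t • d‖ ≤ t * (e / 2) := by
    calc M * ‖y - x - t • d‖ ≤ M * ((e / (2 * M)) * t) := by
          refine mul_le_mul_of_nonneg_left (hy.trans ?_) hM.le
          gcongr
      _ = t * (e / 2) := by field_simp
  have c6 : F y - F x - t • F' x d = (F y - F (x + t • d))
      + (F (x + t • d) - F x - t • F' x d) := by abel
  rw [c6]
  refine (norm_add_le _ _).trans ?_
  linarith

set_option maxHeartbeats 1000000 in
/-- The multiplier construction at one point. -/
lemma multiplier_point {F : Eu n → Eu l} (hF : Continuous F) {Γ : Set (Eu l)}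
    (hΓcl : IsClosed Γ) {x0 ξ : Eu n} (hx0 : F x0 ∈ Γ) {ε L r M : ℝ} (hε : 0 < ε) (hL : 0 ≤ L)
    (hr : 0 < r) (hM : 0 < M)
    (hLip : ∀ y ∈ closedBall x0 r, ∀ z ∈ closedBall x0 r, ‖F y - F z‖ ≤ M * ‖y - z‖)
    (hpen : ∀ y ∈ closedBall x0 r, ⟪ξ, y - x0⟫ ≤ ε * ‖y - x0‖ + L * infDist (F y) Γ)
    (η : ℝ) (hη : 0 < η) :
    ∃ y v lam, ‖y - x0‖ < η ∧ ‖v - F x0‖ < η ∧ ‖lam‖ ≤ 2 * L ∧ lam ∈ regNormal Γ v ∧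
      ∀ᶠ y' in 𝓝 y, ⟪ξ, y' - y⟫ ≤ ⟪lam, F y' - F y⟫ + 3 * ε * ‖y' - y‖ := by
  obtain ⟨m, hm, hm1, hm2, hm3⟩ : ∃ m > (0:ℝ), (2 * L ^ 2 / ε) / m < min η r ∧
      (2 * L + M * (2 * L ^ 2 / ε)) / m < min η 1 ∧ 0 < m := by
    have t1 : Tendsto (fun m : ℝ => (2 * L ^ 2 / ε) / m) atTop (𝓝 0) :=
      tendsto_const_nhds.div_atTop tendsto_id
    have t2 : Tendsto (fun m : ℝ => (2 * L + M * (2 * L ^ 2 / ε)) / m) atTop (𝓝 0) :=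
      tendsto_const_nhds.div_atTop tendsto_id
    obtain ⟨m, ⟨h1, h2⟩, h3⟩ := (((t1.eventually (gt_mem_nhds (lt_min hη hr))).and
      (t2.eventually (gt_mem_nhds (lt_min hη one_pos)))).and (eventually_gt_atTop 0)).exists
    exact ⟨m, h3, h1, h2, h3⟩
  have hK : IsCompact (closedBall x0 r ×ˢ (closedBall (F x0) 1 ∩ Γ)) :=
    (isCompact_closedBall x0 r).prod ((isCompact_closedBall (F x0) 1).inter_right hΓcl)
  have hcK : (x0, F x0) ∈ closedBall x0 r ×ˢ (closedBall (F x0) 1 ∩ Γ) :=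
    ⟨mem_closedBall_self hr.le, mem_closedBall_self zero_le_one, hx0⟩
  obtain ⟨⟨y, v⟩, ⟨hy, hv1, hvΓ⟩, hmin⟩ := hK.exists_isMinOn
    (f := fun p : Eu n × Eu l => -⟪ξ, p.1 - x0⟫ + 2 * ε * ‖p.1 - x0‖
      + m / 2 * ‖F p.1 - p.2‖ ^ 2) ⟨_, hcK⟩ (by fun_prop)
  simp only at hy hv1 hvΓ
  have hmin' : ∀ y' ∈ closedBall x0 r, ∀ v' ∈ closedBall (F x0) 1, v' ∈ Γ →
      -⟪ξ, y - x0⟫ + 2 * ε * ‖y - x0‖ + m / 2 * ‖F y - v‖ ^ 2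
      ≤ -⟪ξ, y' - x0⟫ + 2 * ε * ‖y' - x0‖ + m / 2 * ‖F y' - v'‖ ^ 2 :=
    fun y' h1 v' h2 h3 => hmin (show (y', v') ∈ _ from ⟨h1, h2, h3⟩)
  have h0 := hmin' x0 hcK.1 (F x0) hcK.2.1 hx0
  simp only [sub_self, norm_zero, inner_zero_right] at h0
  have hp := hpen y hy
  have hdist : L * infDist (F y) Γ ≤ L * ‖F y - v‖ := by
    gcongr
    rw [← dist_eq_norm]
    exact infDist_le_dist_of_mem hvΓ
  have k1 : ε * ‖y - x0‖ + m / 2 * ‖F y - v‖ ^ 2 ≤ L * ‖F y - v‖ := by nlinarith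
  have hεn : 0 ≤ ε * ‖y - x0‖ := by positivity
  have k2 : m * ‖F y - v‖ ≤ 2 * L := by
    rcases (norm_nonneg (F y - v)).eq_or_lt with h | h
    · rw [← h]; linarith
    · have : (m * ‖F y - v‖) * ‖F y - v‖ ≤ (2 * L) * ‖F y - v‖ := by nlinarith
      exact le_of_mul_le_mul_right this h
  have k3 : ‖F y - v‖ ≤ 2 * L / m := by rw [le_div_iff₀ hm]; linarith
  have k4 : ‖y - x0‖ ≤ (2 * L ^ 2 / ε) / m := by
    rw [div_div, le_div_iff₀ (by positivity)]
    have : L * (m * ‖F y - v‖) ≤ L * (2 * L) := by gcongr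
    have h5 : 0 ≤ m / 2 * ‖F y - v‖ ^ 2 := by positivity
    have h6 : (ε * ‖y - x0‖) * m ≤ (L * ‖F y - v‖) * m := by
      refine mul_le_mul_of_nonneg_right ?_ hm.le
      linarith
    nlinarith
  have k5 : ‖v - F x0‖ ≤ (2 * L + M * (2 * L ^ 2 / ε)) / m := by
    have e1 : v - F x0 = -(F y - v) + (F y - F x0) := by abel
    have e2 := hLip y hy x0 hcK.1
    have e3 : M * ‖y - x0‖ ≤ M * ((2 * L ^ 2 / ε) / m) := by gcongr
    calc ‖v - F x0‖ ≤ ‖F y - v‖ + ‖F y - F x0‖ := by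
          rw [e1]; refine (norm_add_le _ _).trans ?_; rw [norm_neg]
      _ ≤ 2 * L / m + M * ((2 * L ^ 2 / ε) / m) := by linarith
      _ = _ := by ring
  have hyr : ‖y - x0‖ < r := (k4.trans_lt hm1).trans_le (min_le_right _ _)
  have hv1' : ‖v - F x0‖ < 1 := (k5.trans_lt hm2).trans_le (min_le_right _ _)
  refine ⟨y, v, m • (F y - v), (k4.trans_lt hm1).trans_le (min_le_left _ _),
    (k5.trans_lt hm2).trans_le (min_le_left _ _), ?_, ?_, ?_⟩
  · rw [norm_smul, Real.norm_eq_abs, abs_of_pos hm]; exact k2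
  · refine regNormal_of_prox hvΓ (m / 2) ?_
    have hb : ball (F x0) 1 ∈ 𝓝 v := isOpen_ball.mem_nhds (by rwa [mem_ball, dist_eq_norm])
    filter_upwards [hb] with p hpb hpΓ
    have h1 := hmin' y hy p (ball_subset_closedBall hpb) hpΓ
    have h2 : ‖F y - p‖ ^ 2 = ‖F y - v‖ ^ 2 - 2 * ⟪F y - v, p - v⟫ + ‖p - v‖ ^ 2 := by
      rw [← norm_sub_sq_real]
      congr 2
      abel
    rw [h2] at h1
    rw [real_inner_smul_left]
    nlinarith
  · have hb : ball x0 r ∈ 𝓝 y := isOpen_ball.mem_nhds (by rwa [mem_ball, dist_eq_norm])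
    have hb2 : ball y (2 * ε / (m * M ^ 2)) ∈ 𝓝 y := ball_mem_nhds _ (by positivity)
    filter_upwards [hb, hb2] with y' hy' hy2
    have hy'c := ball_subset_closedBall hy'
    have h1 := hmin' y' hy'c v hv1 hvΓ
    have h2 : ‖F y' - v‖ ^ 2
        = ‖F y - v‖ ^ 2 + 2 * ⟪F y - v, F y' - F y⟫ + ‖F y' - F y‖ ^ 2 := by
      rw [← norm_add_sq_real]
      congr 2
      abel
    have h3 := hLip y' hy'c y hy
    have h4 : ‖F y' - F y‖ ^ 2 ≤ (M * ‖y' - y‖) ^ 2 := by gcongr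
    have h5 : m / 2 * (M * ‖y' - y‖) ^ 2 ≤ ε * ‖y' - y‖ := by
      rw [mem_ball, dist_eq_norm, lt_div_iff₀ (by positivity)] at hy2
      have h6 : (‖y' - y‖ * (m * M ^ 2)) * ‖y' - y‖ ≤ (2 * ε) * ‖y' - y‖ := by gcongr
      nlinarith
    have h6 : m / 2 * ‖F y' - F y‖ ^ 2 ≤ m / 2 * (M * ‖y' - y‖) ^ 2 := by gcongr
    have h7 : ‖y' - x0‖ ≤ ‖y' - y‖ + ‖y - x0‖ := by
      have := norm_add_le (y' - y) (y - x0)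
      rwa [sub_add_sub_cancel] at this
    have h7' : 2 * ε * ‖y' - x0‖ ≤ 2 * ε * (‖y' - y‖ + ‖y - x0‖) := by gcongr
    have h8 : ⟪ξ, y' - y⟫ = ⟪ξ, y' - x0⟫ - ⟪ξ, y - x0⟫ := by
      rw [← inner_sub_right, sub_sub_sub_cancel_right]
    rw [h2] at h1
    rw [real_inner_smul_left, h8]
    nlinarith

/-- Exact penalization: metric subregularity turns regular normals of the preimage into
a penalized inequality. -/
lemma penalize {F : Eu n → Eu l} (hF : Continuous F) {Γ : Set (Eu l)}
    (hΓcl : IsClosed Γ) {x0 ξ : Eu n} (hξ : ξ ∈ regNormal (F ⁻¹' Γ) x0)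
    {κ ρ : ℝ} (hρ : 0 < ρ)
    (hms : ∀ y ∈ closedBall x0 ρ, infDist y (F ⁻¹' Γ) ≤ κ * infDist (F y) Γ)
    (ε : ℝ) (hε : 0 < ε) :
    ∃ r > (0:ℝ), r ≤ ρ ∧ ∀ y ∈ closedBall x0 r,
      ⟪ξ, y - x0⟫ ≤ ε * ‖y - x0‖ + (‖ξ‖ * κ) * infDist (F y) Γ := by
  obtain ⟨r, hr, h⟩ := regNormal_frechet hξ (ε / 2) (half_pos hε)
  refine ⟨min (r / 3) ρ, by positivity, min_le_right _ _, fun y hy => ?_⟩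
  rw [mem_closedBall, dist_eq_norm] at hy
  have hy1 := hy.trans (min_le_left _ _)
  have hy2 : y ∈ closedBall x0 ρ := by
    rw [mem_closedBall, dist_eq_norm]; exact hy.trans (min_le_right _ _)
  obtain ⟨p, hp, hpd⟩ := (hΓcl.preimage hF).exists_infDist_eq_dist ⟨x0, hξ.1⟩ y
  have h1 : ‖y - p‖ ≤ ‖y - x0‖ := by
    rw [← dist_eq_norm, ← dist_eq_norm, ← hpd]
    exact infDist_le_dist_of_mem hξ.1
  have h2 : ‖p - x0‖ ≤ 2 * ‖y - x0‖ := by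
    have := norm_sub_le (y - x0) (y - p)
    rw [sub_sub_sub_cancel_left] at this
    linarith
  have h3 := h p hp (by linarith)
  have h4 : ⟪ξ, y - p⟫ ≤ ‖ξ‖ * ‖y - p‖ := real_inner_le_norm _ _
  have h5 := hms y hy2
  rw [hpd, dist_eq_norm] at h5
  have h6 : ‖ξ‖ * ‖y - p‖ ≤ ‖ξ‖ * (κ * infDist (F y) Γ) := by gcongr
  have h7 : ⟪ξ, y - x0⟫ = ⟪ξ, y - p⟫ + ⟪ξ, p - x0⟫ := by
    rw [← inner_add_right, sub_add_sub_cancel]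
  rw [h7]
  nlinarith

end Main

section Assembly

variable {n l : ℕ}

lemma tangent_part {F : Eu n → Eu l} {F' : Eu n → Eu n → Eu l} (hF' : IsDirDeriv F F')
    (hFc : Continuous F) {Γ : Set (Eu l)} (hΓcl : IsClosed Γ) {x d : Eu n} (hfeas : F x ∈ Γ)
    (hd : d ∈ linCone F F' Γ x) {M ρ κ e0 : ℝ} (hM : 0 < M) (hρ : 0 < ρ)
    (hL : ∀ y ∈ closedBall x ρ, ∀ z ∈ closedBall x ρ, ‖F y - F z‖ ≤ M * ‖y - z‖)
    (hκ : 0 < κ) (he0 : 0 < e0)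
    (hms : ∀ t > (0:ℝ), t < e0 → ∀ y, ‖y - x - t • d‖ ≤ e0 * t →
      infDist y (F ⁻¹' Γ) ≤ κ * infDist (F y) Γ) : d ∈ tanCone (F ⁻¹' Γ) x := by
  refine tanCone_intro hfeas fun e he => ?_
  obtain ⟨e1, he1, h1⟩ := dd_close hF' d hM hρ hL (e / (2 * κ)) (by positivity)
  obtain ⟨t, ht, hte, q, hq, hqe⟩ := tanCone_elim hd
    (min (min e e0) (min e1 (e / (2 * κ)))) (by positivity)
  have a1 : t < e := hte.trans_le ((min_le_left _ _).trans (min_le_left _ _))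
  have a2 : t < e0 := hte.trans_le ((min_le_left _ _).trans (min_le_right _ _))
  have a3 : t < e1 := hte.trans_le ((min_le_right _ _).trans (min_le_left _ _))
  have a4 : ‖q - F x - t • F' x d‖ ≤ (e / (2 * κ)) * t := by
    refine hqe.trans ?_
    gcongr
    exact (min_le_right _ _).trans (min_le_right _ _)
  have hy0 : x + t • d - x - t • d = 0 := by abel
  have b1 := h1 t ht a3 (x + t • d) (by rw [hy0, norm_zero]; positivity)
  have b2 := hms t ht a2 (x + t • d) (by rw [hy0, norm_zero]; positivity)
  obtain ⟨p, hp, hpd⟩ := (hΓcl.preimage hFc).exists_infDist_eq_dist ⟨x, hfeas⟩ (x + t • d)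
  refine ⟨t, ht, a1, p, hp, ?_⟩
  have b3 : infDist (F (x + t • d)) Γ ≤ (e / κ) * t := by
    refine (infDist_le_dist_of_mem hq).trans ?_
    rw [dist_eq_norm]
    have : F (x + t • d) - q = (F (x + t • d) - F x - t • F' x d)
      - (q - F x - t • F' x d) := by abel
    rw [this]
    refine (norm_sub_le _ _).trans ?_
    calc _ ≤ (e / (2 * κ)) * t + (e / (2 * κ)) * t := add_le_add b1 a4
      _ = _ := by field_simp; ring
  have b4 : p - x - t • d = -(x + t • d - p) := by abel
  rw [b4, norm_neg, ← dist_eq_norm, ← hpd]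
  calc _ ≤ κ * infDist (F (x + t • d)) Γ := b2
    _ ≤ κ * ((e / κ) * t) := by gcongr
    _ = e * t := by field_simp

lemma core_part {F : Eu n → Eu l} {F' : Eu n → Eu n → Eu l} (hF' : IsDirDeriv F F')
    (hFc : Continuous F) {Γ : Set (Eu l)} (hΓcl : IsClosed Γ) {x d : Eu n} (hfeas : F x ∈ Γ)
    {M ρ κ e0 : ℝ} (hM : 0 < M) (hρ : 0 < ρ)
    (hL : ∀ y ∈ closedBall x ρ, ∀ z ∈ closedBall x ρ, ‖F y - F z‖ ≤ M * ‖y - z‖)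
    (hκ : 0 < κ) (he0 : 0 < e0)
    (hms : ∀ t > (0:ℝ), t < e0 → ∀ y, ‖y - x - t • d‖ ≤ e0 * t →
      infDist y (F ⁻¹' Γ) ≤ κ * infDist (F y) Γ) {ξ : Eu n}
    (hξ : ξ ∈ dirLimNormal (F ⁻¹' Γ) x d) :
    ∃ B : ℝ, ∀ e > (0:ℝ), ∃ t > (0:ℝ), t < e ∧ ∃ y v lam, ‖y - x - t • d‖ ≤ e * t ∧
      ‖v - F x - t • F' x d‖ ≤ e * t ∧ ‖lam‖ ≤ B ∧ lam ∈ regNormal Γ v ∧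
      ∀ᶠ y' in 𝓝 y, ⟪ξ, y' - y⟫ ≤ ⟪lam, F y' - F y⟫ + e * ‖y' - y‖ := by
  refine ⟨2 * ((‖ξ‖ + 1) * κ), fun e he => ?_⟩
  obtain ⟨e1, he1, h1⟩ := dd_close hF' d hM hρ hL (e / 2) (by positivity)
  obtain ⟨e', he', c1, c2, c3, c4, c5⟩ : ∃ e' > (0:ℝ), e' ≤ e / 8 ∧ e' ≤ e0 / 2 ∧ e' ≤ e1 ∧
      e' ≤ 1 ∧ e' ≤ ρ / (2 * (‖d‖ + 1)) := by
    refine ⟨min (min (e / 8) (e0 / 2)) (min e1 (min 1 (ρ / (2 * (‖d‖ + 1))))),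
      by positivity, ?_, ?_, ?_, ?_, ?_⟩ <;> simp
  obtain ⟨t, ht, hte, p, η', hp, hη', hreg⟩ := dirLimNormal_elim hξ e' he'
  have htd : ‖t • d‖ = t * ‖d‖ := by rw [norm_smul, Real.norm_eq_abs, abs_of_pos ht]
  have hpx : ‖p - x‖ ≤ ρ / 2 := by
    have := norm_add_le (p - x - t • d) (t • d)
    rw [sub_add_cancel, htd] at this
    have h2 : t ≤ ρ / (2 * (‖d‖ + 1)) := hte.le.trans c5
    rw [le_div_iff₀ (by positivity)] at h2
    have h3 : e' * t ≤ 1 * t := by gcongr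
    nlinarith
  have hball : ∀ y ∈ closedBall p (min (e0 / 2 * t) (ρ / 2)), y ∈ closedBall x ρ ∧
      ‖y - x - t • d‖ ≤ e0 * t := by
    intro y hy
    rw [mem_closedBall, dist_eq_norm] at hy
    have hy1 := hy.trans (min_le_left _ _)
    have hy2 := hy.trans (min_le_right _ _)
    constructor
    · rw [mem_closedBall, dist_eq_norm]
      have := norm_add_le (y - p) (p - x)
      rw [sub_add_sub_cancel] at this
      linarith
    · have e1 : y - x - t • d = (y - p) + (p - x - t • d) := by abel
      rw [e1]
      refine (norm_add_le _ _).trans ?_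
      have : e' * t ≤ e0 / 2 * t := by gcongr
      linarith
  obtain ⟨r, hr, hrρ, hpen⟩ := penalize hFc hΓcl hreg (κ := κ)
    (ρ := min (e0 / 2 * t) (ρ / 2)) (by positivity)
    (fun y hy => hms t ht (by linarith) y (hball y hy).2) (e / 8) (by positivity)
  have hsub : closedBall p r ⊆ closedBall x ρ :=
    fun y hy => (hball y (closedBall_subset_closedBall hrρ hy)).1
  obtain ⟨y, v, lam, hy, hv, hlam, hreg', hev⟩ := multiplier_point hFc hΓcl (x0 := p) hreg.1
    (ε := e / 8) (L := ‖η'‖ * κ) (by positivity) (by positivity) hr hM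
    (fun y hy z hz => hL y (hsub hy) z (hsub hz)) hpen (e / 2 * t) (by positivity)
  have he't : e' * t ≤ e / 8 * t := by gcongr
  have het : 0 < e * t := by positivity
  refine ⟨t, ht, by linarith, y, v, lam, ?_, ?_, ?_, hreg', ?_⟩
  · have e1 : y - x - t • d = (y - p) + (p - x - t • d) := by abel
    rw [e1]
    refine (norm_add_le _ _).trans ?_
    linarith
  · have e1 : v - F x - t • F' x d = (v - F p) + (F p - F x - t • F' x d) := by abel
    rw [e1]
    refine (norm_add_le _ _).trans ?_
    have := h1 t ht (by linarith) p (hp.trans (by gcongr))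
    linarith
  · refine hlam.trans ?_
    have h2 : ‖η'‖ ≤ ‖ξ‖ + 1 := by
      have := norm_add_le (η' - ξ) ξ
      rw [sub_add_cancel] at this
      linarith
    gcongr
  · filter_upwards [hev] with y' hy'
    have h2 : ⟪ξ - η', y' - y⟫ ≤ ‖ξ - η'‖ * ‖y' - y‖ := real_inner_le_norm _ _
    rw [norm_sub_rev, inner_sub_left] at h2
    have h3 : ‖η' - ξ‖ * ‖y' - y‖ ≤ (e / 8) * ‖y' - y‖ := by
      gcongr
      exact hη'.trans c1
    have h4 : 0 ≤ e * ‖y' - y‖ := by positivity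
    linarith

lemma pl2_norm_le {H : Type*} [NormedAddCommGroup H] [InnerProductSpace ℝ H] (a : H) (b : ℝ) :
    ‖pl2 a b‖ ≤ ‖a‖ + |b| := by
  refine abs_le_of_sq_le_sq' ?_ (by positivity) |>.2
  rw [WithLp.prod_norm_sq_eq_of_L2]
  have h1 : (pl2 a b).fst = a := rfl
  have h2 : (pl2 a b).snd = b := rfl
  rw [h1, h2, Real.norm_eq_abs]
  nlinarith [norm_nonneg a, abs_nonneg b, mul_nonneg (norm_nonneg a) (abs_nonneg b)]

lemma limit_part {F : Eu n → Eu l} {F' : Eu n → Eu n → Eu l} (hF' : IsDirDeriv F F')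
    (hFc : Continuous F) {Γ : Set (Eu l)} {x d : Eu n} (hfeas : F x ∈ Γ)
    {M ρ : ℝ} (hM : 0 < M) (hρ : 0 < ρ)
    (hL : ∀ y ∈ closedBall x ρ, ∀ z ∈ closedBall x ρ, ‖F y - F z‖ ≤ M * ‖y - z‖)
    {ξ : Eu n}
    (hcore : ∃ B : ℝ, ∀ e > (0:ℝ), ∃ t > (0:ℝ), t < e ∧ ∃ y v lam, ‖y - x - t • d‖ ≤ e * t ∧
      ‖v - F x - t • F' x d‖ ≤ e * t ∧ ‖lam‖ ≤ B ∧ lam ∈ regNormal Γ v ∧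
      ∀ᶠ y' in 𝓝 y, ⟪ξ, y' - y⟫ ≤ ⟪lam, F y' - F y⟫ + e * ‖y' - y‖) :
    ∃ lam ∈ dirLimNormal Γ (F x) (F' x d), ξ ∈ scalDirSubdiff F F' lam x d := by
  obtain ⟨B, hB⟩ := hcore
  have hB' := fun k : ℕ => hB (1 / ((k : ℝ) + 1)) (by positivity)
  choose t ht hte y v lam hy hv hlam hreg hev using hB'
  obtain ⟨mu, -, φ, hφ, hlim⟩ := (isCompact_closedBall (0 : Eu l) B).tendsto_subseq
    (x := lam) (fun k => by rw [mem_closedBall_zero_iff]; exact hlam k)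
  have hsmall : ∀ a > (0:ℝ), ∃ k : ℕ, 1 / ((k : ℝ) + 1) < a ∧ ‖lam k - mu‖ < a := by
    intro a ha
    have h1 := ((tendsto_one_div_add_atTop_nhds_zero_nat (𝕜 := ℝ)).comp
      hφ.tendsto_atTop).eventually (gt_mem_nhds ha)
    have h2 := (tendsto_iff_norm_sub_tendsto_zero.1 hlim).eventually (gt_mem_nhds ha)
    obtain ⟨k, hk1, hk2⟩ := (h1.and h2).exists
    exact ⟨φ k, hk1, hk2⟩
  refine ⟨mu, dirLimNormal_intro hfeas fun e he => ?_, ?_⟩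
  · obtain ⟨k, hk1, hk2⟩ := hsmall e he
    have := ht k
    exact ⟨t k, ht k, (hte k).trans hk1, v k, lam k, (hv k).trans (by gcongr), hk2.le, hreg k⟩
  · refine dirLimNormal_intro (by simp [epigraphSet, pl2]) fun e he => ?_
    obtain ⟨e1, he1, h1⟩ := dd_close hF' d hM hρ hL (e / (2 * (‖mu‖ + 1))) (by positivity)
    obtain ⟨a, ha, c1, c2, c3, c4, c5⟩ : ∃ a > (0:ℝ), a ≤ e / 8 ∧ a ≤ e / (8 * M) ∧
        a ≤ e1 / 2 ∧ a ≤ 1 ∧ a ≤ ρ / (2 * (‖d‖ + 1)) := by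
      refine ⟨min (min (e / 8) (e / (8 * M))) (min (e1 / 2) (min 1 (ρ / (2 * (‖d‖ + 1))))),
        by positivity, ?_, ?_, ?_, ?_, ?_⟩ <;> simp
    obtain ⟨k, hk1, hk2⟩ := hsmall a ha
    have htk := ht k
    have hta : t k < a := (hte k).trans hk1
    have hya : ‖y k - x - t k • d‖ ≤ a * t k := (hy k).trans (by gcongr)
    have htd : ‖t k • d‖ = t k * ‖d‖ := by rw [norm_smul, Real.norm_eq_abs, abs_of_pos htk]
    have hyx : ‖y k - x‖ < ρ := by
      have := norm_add_le (y k - x - t k • d) (t k • d)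
      rw [sub_add_cancel, htd] at this
      have h2 : t k ≤ ρ / (2 * (‖d‖ + 1)) := hta.le.trans c5
      rw [le_div_iff₀ (by positivity)] at h2
      have h3 : a * t k ≤ 1 * t k := by gcongr
      nlinarith
    have hyb : y k ∈ ball x ρ := by rwa [mem_ball, dist_eq_norm]
    have hφc : Continuous (fun y => ⟪mu, F y⟫) := by fun_prop
    have hsub : ∀ᶠ y' in 𝓝 (y k), ⟪ξ, y' - y k⟫
        ≤ ⟪mu, F y'⟫ - ⟪mu, F (y k)⟫ + e / 4 * ‖y' - y k‖ := by
      filter_upwards [hev k, isOpen_ball.mem_nhds hyb] with y' h2 h3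
      have h4 := hL y' (ball_subset_closedBall h3) _ (ball_subset_closedBall hyb)
      have h5 : ⟪lam k - mu, F y' - F (y k)⟫ ≤ ‖lam k - mu‖ * ‖F y' - F (y k)‖ :=
        real_inner_le_norm _ _
      have h6 : ‖lam k - mu‖ * ‖F y' - F (y k)‖ ≤ (e / (8 * M)) * (M * ‖y' - y k‖) := by
        gcongr
        exact hk2.le.trans c2
      have h7 : (e / (8 * M)) * (M * ‖y' - y k‖) = e / 8 * ‖y' - y k‖ := by field_simp
      have h8 : (1 / ((k : ℝ) + 1)) * ‖y' - y k‖ ≤ e / 8 * ‖y' - y k‖ :=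
        mul_le_mul_of_nonneg_right (hk1.le.trans c1) (norm_nonneg _)
      rw [inner_sub_left] at h5
      rw [← inner_sub_right mu]
      linarith
    obtain ⟨z, ξ', hz, hξ', hreg'⟩ := fuzzy_sub hφc (by positivity) hsub (a * t k) (by positivity)
    have hzx : ‖z - x - t k • d‖ ≤ 2 * a * t k := by
      have e2 : z - x - t k • d = (z - y k) + (y k - x - t k • d) := by abel
      rw [e2]
      refine (norm_add_le _ _).trans ?_
      linarith
    refine ⟨t k, htk, by linarith, _, _, ?_, ?_, hreg'⟩
    · have h2 := h1 (t k) htk (by linarith) z (hzx.trans (by gcongr; linarith))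
      have e2 : pl2 z ⟪mu, F z⟫ - pl2 x ⟪mu, F x⟫ - t k • pl2 d ⟪mu, F' x d⟫
          = pl2 (z - x - t k • d) ⟪mu, F z - F x - t k • F' x d⟫ := by
        rw [inner_sub_right, inner_sub_right, real_inner_smul_right]
        rfl
      rw [e2]
      refine (pl2_norm_le _ _).trans ?_
      have h3 : |⟪mu, F z - F x - t k • F' x d⟫| ≤ e / 2 * t k := by
        refine (abs_real_inner_le_norm _ _).trans ?_
        calc ‖mu‖ * ‖F z - F x - t k • F' x d‖
            ≤ (‖mu‖ + 1) * (e / (2 * (‖mu‖ + 1)) * t k) := by gcongr; linarith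
          _ = e / 2 * t k := by field_simp
      have h4 : 2 * a * t k ≤ e / 2 * t k := by gcongr; linarith
      linarith
    · have e2 : pl2 ξ' (-1) - pl2 ξ (-1) = pl2 (ξ' - ξ) (-1 - -1) := rfl
      rw [e2]
      refine (pl2_norm_le _ _).trans ?_
      simp only [sub_self, abs_zero]
      linarith

end Assembly

/-- Under directional MSCQ, directional tangents and an upper estimate for the
directional limiting normal cone to the feasible set. -/
theorem stmt7 {n l : ℕ}
    (F : Eu n → Eu l) (F' : Eu n → Eu n → Eu l)
    (hLip : LocallyLipschitz F) (hF' : IsDirDeriv F F')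
    (Γ : Set (Eu l)) (hΓne : Γ.Nonempty) (hΓcl : IsClosed Γ)
    (x : Eu n) (hfeas : F x ∈ Γ)
    (d : Eu n) (hd : d ∈ linCone F F' Γ x) (hMSCQ : MSCQdir F Γ x d) :
    d ∈ tanCone (F ⁻¹' Γ) x ∧
    dirLimNormal (F ⁻¹' Γ) x d ⊆
      {ξ | ∃ lam ∈ dirLimNormal Γ (F x) (F' x d),
        ξ ∈ scalDirSubdiff F F' lam x d} := by
  obtain ⟨K, s, hs, hK⟩ := hLip x
  obtain ⟨ρ, hρ, hρs⟩ := Metric.nhds_basis_closedBall.mem_iff.1 hs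
  have hM : (0:ℝ) < (K : ℝ) + 1 := by positivity
  set M : ℝ := (K : ℝ) + 1 with hMdef
  have hL : ∀ y ∈ closedBall x ρ, ∀ z ∈ closedBall x ρ, ‖F y - F z‖ ≤ M * ‖y - z‖ := by
    intro y hy z hz
    have h := hK.dist_le_mul y (hρs hy) z (hρs hz)
    rw [dist_eq_norm, dist_eq_norm] at h
    have := norm_nonneg (y - z)
    rw [hMdef]
    nlinarith
  have hFc : Continuous F := hLip.continuous
  obtain ⟨ε, hε, δ, hδ, κ, hκ, hms⟩ := hMSCQ
  obtain ⟨e0, he0, hnb⟩ := dirNbhd_of_close d ε δ hε hδ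
  have hms' : ∀ t > (0:ℝ), t < e0 → ∀ y, ‖y - x - t • d‖ ≤ e0 * t →
      infDist y (F ⁻¹' Γ) ≤ κ * infDist (F y) Γ :=
    fun t ht hte y hy => hms y (hnb t ht hte _ hy)
  constructor
  · exact tangent_part hF' hFc hΓcl hfeas hd hM hρ hL hκ he0 hms'
  intro ξ hξ
  have hcore := core_part hF' hFc hΓcl hfeas hM hρ hL hκ he0 hms' hξ
  exact limit_part hF' hFc hfeas hM hρ hL hcore

end
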